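/- Let R be a commutative Noetherian ring with unity, M an R-module (not necessarily finitely generated), and I an ideal of R with dim(R/(I + Ann M)) = d, where Ann M is the annihilator of M. Let t ≥ 0 be an integer and let J be an ideal of R such that H^{d+t}_{I+J}(M) ≠ 0. If cd(I,M) = t, then the dimension of the support of H^t_I(M) equals d. -/

import Mathlib

universe u

open CategoryTheory

/-- The cohomological dimension of `M` with respect to `I`:
`cd(I,M) = sup { i ∈ ℕ | H^i_I(M) ≠ 0 }`, as an element of `ℕ∞`. -/
noncomputable def cohomologicalDimension {R : Type u} [CommRing R] (I : Ideal R)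
    (M : ModuleCat.{u} R) : ℕ∞ :=
  sSup {c : ℕ∞ | ∃ i : ℕ, c = i ∧ Nontrivial ((localCohomology I i).obj M)}

/-!
Let `K = I + J`. There is a spectral sequence `H^p_K(H^q_I(M)) ⇒ H^{p+q}_K(M)`, since
`Γ_K Γ_I = Γ_K` and `Γ_I` preserves injectives, so `H^{d+t}_K(M)` vanishes as soon as
`H^p_K(H^q_I(M))` does for all `p + q = d + t`. The support of `H^q_I(M)` lies in `V(I + Ann M)` and
so has dimension at most `d`, and `H^q_I(M) = 0` for `q > t`. If the support of `H^t_I(M)` had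
dimension less than `d`, Grothendieck vanishing would kill all these iterated modules: for `q < t`
because `p > d`, and for `q = t` because `p = d`.

The long exact sequence of local cohomology comes from those of `Ext(R/J^k, -)` in the derived
category, by passing to the direct limit over `k`; this requires comparing that `Ext` with the left
derived functors of `Hom(-, M)` in terms of which `localCohomology` is defined.
-/

section Torsion

open Submodule

variable {R : Type u} [CommRing R] {J : Ideal R} {N : Type*} [AddCommGroup N] [Module R N]

lemma mem_primaryComponent_iff {x : N} :
    x ∈ J.primaryComponent N ↔ ∃ k : ℕ, ∀ r ∈ J ^ k, r • x = 0 :=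
  (Ideal.primaryComponent_mem ..).trans <|
    exists_congr fun _ => (mem_torsionBySet_iff ..).trans Subtype.forall

lemma primaryComponent_anti {I K : Ideal R} (h : I ≤ K) :
    K.primaryComponent N ≤ I.primaryComponent N :=
  iSup_mono fun k => torsionBySet_le_torsionBySet_of_subset (Ideal.pow_right_mono h k)

lemma primaryComponent_primaryComponent : J.primaryComponent (J.primaryComponent N) = ⊤ := by
  refine eq_top_iff.2 fun x _ => ?_
  obtain ⟨k, hk⟩ := mem_primaryComponent_iff.1 x.2
  exact mem_primaryComponent_iff.2 ⟨k, fun r hr => Subtype.ext (hk r hr)⟩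

lemma primaryComponent_eq_top_of_surjective {N' : Type*} [AddCommGroup N'] [Module R N']
    {f : N →ₗ[R] N'} (hf : Function.Surjective f) (hN : J.primaryComponent N = ⊤) :
    J.primaryComponent N' = ⊤ := by
  refine eq_top_iff.2 fun y _ => ?_
  obtain ⟨x, rfl⟩ := hf y
  exact J.primaryComponent_map_mem f ⟨x, hN ▸ mem_top⟩

lemma exists_le_torsionBySet_pow {P : Submodule R N} (hP : P.FG)
    (h : P ≤ J.primaryComponent N) : ∃ k : ℕ, P ≤ torsionBySet R N ↑(J ^ k) := by
  have hdir : Directed (· ≤ ·) fun k : ℕ => torsionBySet R N ↑(J ^ k) :=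
    (monotone_nat_of_le_succ fun k =>
      torsionBySet_le_torsionBySet_pow k (k + 1) k.le_succ J).directed_le
  obtain ⟨_, ⟨k, rfl⟩, hk⟩ := (fg_iff_compact P).1 hP _ _ (Set.range_nonempty _)
    hdir.directedOn_range (isLUB_iSup) h
  exact ⟨k, hk⟩

lemma primaryComponent_quotient_primaryComponent (hJ : J.FG) :
    J.primaryComponent (N ⧸ J.primaryComponent N) = ⊥ := by
  refine eq_bot_iff.2 fun x hx => ?_
  obtain ⟨y, rfl⟩ := mkQ_surjective _ x
  obtain ⟨k, hk⟩ := mem_primaryComponent_iff.1 hx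
  have hle : J ^ k • span R {y} ≤ J.primaryComponent N := by
    refine smul_le.2 fun r hr z hz => ?_
    obtain ⟨s, rfl⟩ := mem_span_singleton.1 hz
    rw [smul_comm]
    exact smul_mem _ s ((Quotient.mk_eq_zero _).1 (hk r hr))
  obtain ⟨l, hl⟩ := exists_le_torsionBySet_pow (Submodule.FG.smul hJ.pow (fg_span_singleton y)) hle
  refine (Quotient.mk_eq_zero _).2 (mem_primaryComponent_iff.2 ⟨l + k, fun r hr => ?_⟩)
  rw [pow_add] at hr
  induction hr using Submodule.mul_induction_on' with
  | mem_mul_mem a ha b hb =>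
    rw [mul_smul]
    exact (mem_torsionBySet_iff ..).1
      (hl (smul_mem_smul hb (mem_span_singleton_self y))) ⟨a, ha⟩
  | add a _ b _ ha hb => rw [add_smul, ha, hb, add_zero]

lemma subsingleton_of_isSMulRegular_of_mem {x : R} (hxJ : x ∈ J) (hx : IsSMulRegular N x)
    (hN : J.primaryComponent N = ⊤) : Subsingleton N := by
  refine subsingleton_of_forall_eq 0 fun y => ?_
  obtain ⟨k, hk⟩ := mem_primaryComponent_iff.1 (hN ▸ mem_top : y ∈ J.primaryComponent N)
  exact (hx.pow k).right_eq_zero_of_smul (hk _ (Ideal.pow_mem_pow hxJ k))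

lemma exists_mem_isSMulRegular [IsNoetherianRing R] [Module.Finite R N]
    (hN : J.primaryComponent N = ⊥) : ∃ x ∈ J, IsSMulRegular N x := by
  by_contra! hx
  have hsub : (J : Set R) ⊆ ⋃ p ∈ associatedPrimes R N, p := by
    rw [biUnion_associatedPrimes_eq_compl_regular R N]
    exact hx
  obtain ⟨p, hp, hJp⟩ := (Ideal.subset_union_prime_finite (associatedPrimes.finite R N) 0 0
    fun p hp _ _ => IsAssociatedPrime.isPrime hp).1 hsub
  obtain ⟨hprime, y, hy⟩ := (isAssociatedPrime_iff_exists_injective_linearMap _ _).1 hp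
  have hy0 : y (Submodule.Quotient.mk 1) ∈ J.primaryComponent N := by
    refine mem_primaryComponent_iff.2 ⟨1, fun r hr => ?_⟩
    rw [pow_one] at hr
    rw [← map_smul, ← Quotient.mk_smul, smul_eq_mul, mul_one,
      (Quotient.mk_eq_zero _).2 (hJp hr), map_zero]
  rw [hN, mem_bot, map_eq_zero_iff _ hy, Quotient.mk_eq_zero] at hy0
  exact hprime.ne_top ((Ideal.eq_top_iff_one _).2 hy0)

lemma exists_comap_pow_smul_top_le_ker [IsNoetherianRing R] {A : Type*} [AddCommGroup A]
    [Module R A] [Module.Finite R A] {P : Submodule R A} (f : P →ₗ[R] N)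
    (hf : LinearMap.range f ≤ J.primaryComponent N) :
    ∃ n : ℕ, (J ^ n • ⊤ : Submodule R A).comap P.subtype ≤ LinearMap.ker f := by
  obtain ⟨k, hk⟩ := exists_le_torsionBySet_pow (Module.Finite.iff_fg.1 (.range f)) hf
  obtain ⟨m, hm⟩ := J.exists_pow_inf_eq_pow_smul P
  have hle : J ^ k • (J ^ m • (⊤ : Submodule R A) ⊓ P) ≤ (LinearMap.ker f).map P.subtype := by
    refine smul_le.2 fun r hr a ha => ⟨r • ⟨a, ha.2⟩, ?_, rfl⟩
    rw [SetLike.mem_coe, LinearMap.mem_ker, map_smul]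
    exact (mem_torsionBySet_iff ..).1 (hk ⟨_, rfl⟩) ⟨r, hr⟩
  refine ⟨m + k, fun x hx => ?_⟩
  have hx' := (hm (m + k) le_self_add).le ⟨hx, x.2⟩
  rw [Nat.add_sub_cancel_left] at hx'
  obtain ⟨y, hy, hyx⟩ := hle hx'
  rwa [← Subtype.ext hyx]

end Torsion

section Injective

open Submodule

variable {R : Type u} [CommRing R]

lemma exists_comp_eq_of_ker_le {A B : Type*} {E : Type u} [AddCommGroup A] [AddCommGroup B]
    [AddCommGroup E] [Module R A] [Module R B] [Module R E] [Module.Injective R E]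
    {q : A →ₗ[R] B} {f : A →ₗ[R] E} (h : LinearMap.ker q ≤ LinearMap.ker f) :
    ∃ g : B →ₗ[R] E, g ∘ₗ q = f := by
  obtain ⟨g, hg⟩ := Module.Injective.extension_property R E _ B ((LinearMap.ker q).liftQ q le_rfl)
    (LinearMap.ker_eq_bot.1 (ker_liftQ_eq_bot _ _ _ le_rfl)) ((LinearMap.ker q).liftQ f h)
  exact ⟨g, LinearMap.ext fun a => congr($hg (Submodule.Quotient.mk a))⟩

instance injective_primaryComponent [IsNoetherianRing R] (J : Ideal R) (E : Type u)
    [AddCommGroup E] [Module R E] [Module.Injective R E] :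
    Module.Injective R (J.primaryComponent E) := by
  refine Module.Baer.injective fun a f => ?_
  let f' : a →ₗ[R] E := (J.primaryComponent E).subtype ∘ₗ f
  obtain ⟨n, hn⟩ := exists_comap_pow_smul_top_le_ker f'
    (LinearMap.range_le_iff_comap.2 (eq_top_iff.2 fun x _ => (f x).2))
  let q : a →ₗ[R] R ⧸ (J ^ n • ⊤ : Submodule R R) := mkQ _ ∘ₗ a.subtype
  obtain ⟨g, hg⟩ := exists_comp_eq_of_ker_le (q := q) (f := f') fun x hx =>
    hn ((Quotient.mk_eq_zero (J ^ n • ⊤)).1 hx)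
  refine ⟨(g ∘ₗ mkQ _).codRestrict _ fun x => mem_primaryComponent_iff.2 ⟨n, fun r hr => ?_⟩,
    fun x hx => Subtype.ext congr($hg ⟨x, hx⟩)⟩
  rw [← map_smul, LinearMap.comp_apply, mkQ_apply,
    (Quotient.mk_eq_zero _).2 (smul_mem_smul hr mem_top), map_zero]

lemma exists_injective_linearMap (N : Type u) [AddCommGroup N] [Module R N] :
    ∃ (E : Type u) (_ : AddCommGroup E) (_ : Module R E) (_ : Module.Injective R E)
      (f : N →ₗ[R] E), Function.Injective f := by
  let E := Injective.under (ModuleCat.of R N)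
  have : Injective (ModuleCat.of R E) := inferInstanceAs (Injective E)
  exact ⟨E, inferInstance, inferInstance, Module.injective_module_of_injective_object R E,
    (Injective.ι (ModuleCat.of R N)).hom, (ModuleCat.mono_iff_injective _).1 inferInstance⟩

end Injective

open Abelian Opposite

section ExtComparison

variable {R : Type u} [CommRing R]

/-- A left homology datum of a short complex of modules, from a map on cycles which is surjective
with kernel the boundaries. -/
noncomputable def leftHomologyDataOfSurjective {S : ShortComplex (ModuleCat.{u} R)}
    {H : ModuleCat.{u} R}
    (π : LinearMap.ker S.g.hom →ₗ[R] H) (hπ : Function.Surjective π)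
    (hker : ∀ x, π x = 0 ↔ ↑x ∈ LinearMap.range S.f.hom) : S.LeftHomologyData :=
  have hf (x : S.X₁) : S.f.hom x ∈ LinearMap.ker S.g.hom := congr($(S.zero).hom x)
  { K := .of R (LinearMap.ker S.g.hom)
    H := H
    i := ModuleCat.ofHom (LinearMap.ker S.g.hom).subtype
    π := ModuleCat.ofHom π
    wi := by ext x; exact x.2
    hi := ModuleCat.kernelIsLimit S.g
    wπ := by ext x; exact (hker ⟨_, hf x⟩).2 ⟨x, rfl⟩
    hπ := ModuleCat.isColimitCokernelCofork (ModuleCat.ofHom (S.f.hom.codRestrict _ hf))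
      (ModuleCat.ofHom π) (fun x => (hker x).trans
        (exists_congr fun y => (Subtype.ext_iff (a1 := ⟨S.f.hom y, hf y⟩)).symm)) hπ }

/-- Morphisms on cycles and homology which are compatible with `φ`; compatibility with the
boundary maps comes for free. -/
def leftHomologyMapDataOfCommi {S₁ S₂ : ShortComplex (ModuleCat.{u} R)} {φ : S₁ ⟶ S₂}
    {h₁ : S₁.LeftHomologyData} {h₂ : S₂.LeftHomologyData} (φK : h₁.K ⟶ h₂.K) (φH : h₁.H ⟶ h₂.H)
    (commi : φK ≫ h₂.i = h₁.i ≫ φ.τ₂) (commπ : h₁.π ≫ φH = φK ≫ h₂.π) :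
    ShortComplex.LeftHomologyMapData φ h₁ h₂ where
  φK := φK
  φH := φH
  commf' := by simp [← cancel_mono h₂.i, commi, φ.comm₁₂]

variable {X X' Y : ModuleCat.{u} R} (P : ProjectiveResolution X) (P' : ProjectiveResolution X')
  {n : ℕ}

lemma extMk_zero_eq_zero_iff (f : P.complex.X 0 ⟶ Y) (m : ℕ) (hm : 0 + 1 = m)
    (hf : P.complex.d m 0 ≫ f = 0) : P.extMk f m hm hf = 0 ↔ f = 0 := by
  rw [← P.extEquivCohomologyClass.apply_eq_iff_eq, P.extEquivCohomologyClass_extMk,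
    P.extEquivCohomologyClass_zero, CochainComplex.HomComplex.CohomologyClass.mk_eq_zero_iff,
    CochainComplex.HomComplex.Cocycle.toSingleMk_mem_coboundaries_iff _ _ _ _ _ 1 (by simp)]
  have hzero : Limits.IsZero (P.cochainComplex.X 1) :=
    CochainComplex.isZero_of_isStrictlyLE P.cochainComplex 0 1
  refine ⟨fun ⟨g, hg⟩ => ?_, fun h => ⟨0, by simp [h]⟩⟩
  rw [hzero.eq_of_src g 0, Limits.comp_zero] at hg
  exact (cancel_epi _).1 (hg.symm.trans Limits.comp_zero.symm)

lemma extMk_smul (r : R) (f : P.complex.X n ⟶ Y) (m : ℕ) (hm : n + 1 = m)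
    (hf : P.complex.d m n ≫ f = 0) :
    P.extMk (r • f) m hm (by simp [hf]) = r • P.extMk f m hm hf := by
  rw [Ext.smul_eq_comp_mk₀, P.extMk_comp_mk₀]
  simp

/-- The complex `Hom(P, Y)` around degree `n`, for a projective resolution `P`. -/
noncomputable abbrev homShortComplex (n : ℕ) (Y : ModuleCat.{u} R) :
    ShortComplex (ModuleCat.{u} R) :=
  (((((linearYoneda R _).obj Y).rightOp.mapHomologicalComplex _).obj P.complex).sc n).unop

/-- The class in `Ext` of a cocycle of `Hom(P, Y)`. -/
noncomputable def extMkₗ (n : ℕ) (Y : ModuleCat.{u} R) :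
    LinearMap.ker (homShortComplex P n Y).g.hom →ₗ[R] Ext X Y n where
  toFun f := P.extMk f.1 _ (ChainComplex.prev ℕ n).symm f.2
  map_add' _ _ := (P.add_extMk ..).symm
  map_smul' r _ := extMk_smul P r ..

lemma extMkₗ_surjective : Function.Surjective (extMkₗ P n Y) := fun e => by
  obtain ⟨f, hf, rfl⟩ := P.extMk_surjective e _ (ChainComplex.prev ℕ n).symm
  exact ⟨⟨f, hf⟩, rfl⟩

lemma extMkₗ_eq_zero_iff (f : LinearMap.ker (homShortComplex P n Y).g.hom) :
    extMkₗ P n Y f = 0 ↔ ↑f ∈ LinearMap.range (homShortComplex P n Y).f.hom := by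
  cases n with
  | zero =>
    have : (homShortComplex P 0 Y).f.hom = 0 := by
      ext (g : P.complex.X _ ⟶ Y)
      exact (congrArg (· ≫ g) (P.complex.shape 0 _ (by simp))).trans Limits.zero_comp
    rw [this, LinearMap.range_zero, Submodule.mem_bot]
    exact extMk_zero_eq_zero_iff P f.1 _ (by simp) f.2
  | succ n => exact P.extMk_eq_zero_iff f.1 _ (by simp) f.2 _ (by simp)

/-- `Ext X Y n` as the cohomology of `Hom(P, Y)`. -/
noncomputable def extHomologyData (n : ℕ) (Y : ModuleCat.{u} R) :
    (homShortComplex P n Y).LeftHomologyData :=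
  leftHomologyDataOfSurjective (H := .of R (Ext X Y n)) (extMkₗ P n Y) (extMkₗ_surjective P)
    (extMkₗ_eq_zero_iff P)

/-- `extHomologyData` in the opposite category, where `leftDerived` of the contravariant functor
`Hom(-, Y)` is computed. -/
noncomputable def extHomologyDataOp (n : ℕ) (Y : ModuleCat.{u} R) :
    ((((linearYoneda R _).obj Y).rightOp.mapHomologicalComplex _).obj
      P.complex |>.sc n).RightHomologyData :=
  (extHomologyData P n Y).op

/-- The left derived functors of `Hom(-, Y)` at `X`, computed by the projective resolution `P`, are
`Ext X Y n`. -/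
noncomputable def leftDerivedIsoExt (n : ℕ) (Y : ModuleCat.{u} R) :
    (((linearYoneda R _).obj Y).rightOp.leftDerived n).obj X ≅ op (.of R (Ext X Y n)) :=
  P.isoLeftDerivedObj _ n ≪≫ (extHomologyDataOp P n Y).homologyIso

variable {P P'}

/-- Precomposition with a morphism `φ` of projective resolutions, on cocycles and on `Ext`. -/
noncomputable def extHomologyMapData {f : X ⟶ X'} (φ : P.Hom P' f) (n : ℕ) (Y : ModuleCat.{u} R) :
    ShortComplex.LeftHomologyMapData
      (ShortComplex.unopMap ((HomologicalComplex.shortComplexFunctor _ _ n).map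
        ((((linearYoneda R _).obj Y).rightOp.mapHomologicalComplex _).map φ.hom)))
      (extHomologyData P' n Y) (extHomologyData P n Y) :=
  have hφ (x : P'.complex.X n ⟶ Y) (hx : P'.complex.d _ n ≫ x = 0) :
      P.complex.d _ n ≫ φ.hom.f n ≫ x = 0 := by
    rw [← φ.hom.comm_assoc, hx, Limits.comp_zero]
  leftHomologyMapDataOfCommi
    (ModuleCat.ofHom (((Linear.leftComp R Y (φ.hom.f n)).comp (LinearMap.ker _).subtype).codRestrict
      _ fun x => hφ x.1 x.2))
    (ModuleCat.ofHom ((Ext.mk₀ f).precompOfLinear R Y (zero_add n))) rfl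
    (ModuleCat.hom_ext (LinearMap.ext fun x => P'.mk₀_comp_extMk x.1 _ (by simp) x.2 φ))

lemma leftDerivedIsoExt_naturality {f : X ⟶ X'} (φ : P.Hom P' f) (n : ℕ) (Y : ModuleCat.{u} R) :
    (((linearYoneda R _).obj Y).rightOp.leftDerived n).map f ≫ (leftDerivedIsoExt P' n Y).hom =
      (leftDerivedIsoExt P n Y).hom ≫
        (ModuleCat.ofHom ((Ext.mk₀ f).precompOfLinear R Y (zero_add n))).op := by
  exact ((CommSq.mk
    (P.isoLeftDerivedObj_hom_naturality f P' φ.hom φ.hom_f_zero_comp_π_f_zero _ n)).vert_comp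
    (CommSq.mk (extHomologyMapData φ n Y).op.homologyMap_comm)).w

/-- The comparison of the two definitions of `Ext` in Mathlib: morphisms in the derived category,
and left derived functors of `Hom(-, Y)`. -/
noncomputable def extEquiv (n : ℕ) (X Y : ModuleCat.{u} R) :
    Ext X Y n ≃ₗ[R] ((_root_.Ext R (ModuleCat.{u} R) n).obj (op X)).obj Y :=
  (leftDerivedIsoExt (projectiveResolution X) n Y).unop.toLinearEquiv

lemma extEquiv_naturality (f : X ⟶ X') (e : Ext X' Y n) :
    (((_root_.Ext R (ModuleCat.{u} R) n).map f.op).app Y).hom (extEquiv n X' Y e) =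
      extEquiv n X Y ((Ext.mk₀ f).comp e (zero_add n)) :=
  let φ : (projectiveResolution X).Hom (projectiveResolution X') f :=
    ⟨ProjectiveResolution.lift f _ _, ProjectiveResolution.lift_commutes_zero f _ _⟩
  congr($(leftDerivedIsoExt_naturality φ n Y).unop.hom e)

end ExtComparison

section DirectLimit

open Limits localCohomology

variable {R : Type u} [CommRing R] (J : Ideal R) (i : ℕ) (M : ModuleCat.{u} R)

/-- The module `R/J^k`, as an object of the category of modules. -/
abbrev quotPow (k : ℕ) : ModuleCat.{u} R := .of R (R ⧸ J ^ k)

/-- The projection `R/J^l → R/J^k` for `k ≤ l`, a transition map of the inverse system defining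
`H^i_J`. -/
def quotPowMap {k l : ℕ} (h : k ≤ l) : quotPow J l ⟶ quotPow J k :=
  ModuleCat.ofHom (Submodule.factor (Ideal.pow_le_pow_right h))

/-- The cocone on the modules `Ext^i(R/J^k, M)` with point `H^i_J(M)`. -/
noncomputable def localCohomologyCocone :
    Cocone (diagram (idealPowersDiagram J) i ⋙ (evaluation _ _).obj M) :=
  ((evaluation _ _).obj M).mapCocone (colimit.cocone (diagram (idealPowersDiagram J) i))

/-- `H^i_J(M)` is the direct limit of the modules `Ext^i(R/J^k, M)`. -/
noncomputable def isColimitLocalCohomologyCocone : IsColimit (localCohomologyCocone J i M) :=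
  isColimitOfPreserves _ (colimit.isColimit _)

/-- The canonical map from `Ext^i(R/J^k, M)` to its direct limit over `k`. -/
noncomputable def toLocalCohomology (k : ℕ) :
    Ext (quotPow J k) M i →ₗ[R] (localCohomology J i).obj M :=
  ((localCohomologyCocone J i M).ι.app (op (op k))).hom ∘ₗ (extEquiv i (quotPow J k) M).toLinearMap

instance preservesColimitsOfShape_forget :
    PreservesColimitsOfShape ℕᵒᵖᵒᵖ (forget (ModuleCat.{u} R)) :=
  have := preservesSmallestFilteredColimits_of_preservesFilteredColimits (forget (ModuleCat.{u} R))
  PreservesFilteredColimitsOfSize.preserves_filtered_colimits _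

variable {J i M}

lemma diagram_map_extEquiv {k l : ℕᵒᵖᵒᵖ} (f : k ⟶ l) (e : Ext (quotPow J k.unop.unop) M i) :
    (((diagram (idealPowersDiagram J) i).map f).app M).hom (extEquiv i (quotPow J _) M e) =
      extEquiv i (quotPow J _) M
        ((Ext.mk₀ (quotPowMap J (leOfHom f.unop.unop))).comp e (zero_add i)) :=
  extEquiv_naturality _ e

lemma toLocalCohomology_mk₀_comp {k l : ℕ} (h : k ≤ l) (e : Ext (quotPow J k) M i) :
    toLocalCohomology J i M l ((Ext.mk₀ (quotPowMap J h)).comp e (zero_add i)) =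
      toLocalCohomology J i M k e :=
  (congrArg _ (diagram_map_extEquiv (homOfLE h).op.op e).symm).trans
    congr($((localCohomologyCocone J i M).w (homOfLE h).op.op).hom (extEquiv i (quotPow J k) M e))

lemma exists_toLocalCohomology_eq (z : (localCohomology J i).obj M) :
    ∃ k e, toLocalCohomology J i M k e = z := by
  obtain ⟨k, y, rfl⟩ := Concrete.isColimit_exists_rep _ (isColimitLocalCohomologyCocone J i M) z
  obtain ⟨e, rfl⟩ := (extEquiv i (quotPow J k.unop.unop) M).surjective y
  exact ⟨_, e, rfl⟩

lemma toLocalCohomology_eq_zero_iff {k : ℕ} {e : Ext (quotPow J k) M i} :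
    toLocalCohomology J i M k e = 0 ↔
      ∃ (l : ℕ) (h : k ≤ l), (Ext.mk₀ (quotPowMap J h)).comp e (zero_add i) = 0 := by
  refine ⟨fun h => ?_, fun ⟨l, h, he⟩ => ?_⟩
  · obtain ⟨l, f, g, hfg⟩ := Concrete.isColimit_exists_of_rep_eq _
      (isColimitLocalCohomologyCocone J i M) (i := op (op k)) (j := op (op k))
      (extEquiv i (quotPow J k) M e) 0 (h.trans (map_zero _).symm)
    refine ⟨l.unop.unop, leOfHom f.unop.unop, (extEquiv i (quotPow J _) M).injective ?_⟩
    exact (diagram_map_extEquiv f e).symm.trans (hfg.trans ((map_zero _).trans (map_zero _).symm))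
  · rw [← toLocalCohomology_mk₀_comp h, he, map_zero]

variable {A : ModuleCat.{u} R}

/-- The map out of `H^i_J(M)` given by a compatible family of maps out of `Ext^i(R/J^k, M)`. -/
noncomputable def localCohomologyDesc (φ : ∀ k, Ext (quotPow J k) M i →ₗ[R] A)
    (hφ : ∀ ⦃k l⦄ (h : k ≤ l) e,
      φ l ((Ext.mk₀ (quotPowMap J h)).comp e (zero_add i)) = φ k e) :
    (localCohomology J i).obj M →ₗ[R] A :=
  ((isColimitLocalCohomologyCocone J i M).desc
    { pt := A
      ι :=
        { app k := ModuleCat.ofHom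
            (φ k.unop.unop ∘ₗ (extEquiv i (quotPow J k.unop.unop) M).symm.toLinearMap)
          naturality k l f := by
            refine ModuleCat.hom_ext (LinearMap.ext fun y => ?_)
            obtain ⟨e, rfl⟩ := (extEquiv i (quotPow J k.unop.unop) M).surjective y
            have h := congrArg (extEquiv i (quotPow J l.unop.unop) M).symm
              (diagram_map_extEquiv f e)
            rw [LinearEquiv.symm_apply_apply] at h
            exact (congrArg (φ _) h).trans ((hφ (leOfHom f.unop.unop) e).trans
              (congrArg (φ _) (LinearEquiv.symm_apply_apply ..).symm)) } }).hom

lemma localCohomologyDesc_toLocalCohomology (φ : ∀ k, Ext (quotPow J k) M i →ₗ[R] A)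
    (hφ : ∀ ⦃k l⦄ (h : k ≤ l) e,
      φ l ((Ext.mk₀ (quotPowMap J h)).comp e (zero_add i)) = φ k e) (k : ℕ)
    (e : Ext (quotPow J k) M i) :
    localCohomologyDesc φ hφ (toLocalCohomology J i M k e) = φ k e := by
  refine (congr($((isColimitLocalCohomologyCocone J i M).fac _ (op (op k))).hom
    (extEquiv i (quotPow J k) M e))).trans ?_
  exact congrArg (φ k) ((extEquiv i (quotPow J k) M).symm_apply_apply e)

section Comp

variable {N L : ModuleCat.{u} R} {a b j l : ℕ}

lemma mk₀_comp_comp {X' X : ModuleCat.{u} R} (f : X' ⟶ X) (e : Ext X M i) (α : Ext M N a)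
    (h : i + a = j) :
    ((Ext.mk₀ f).comp e (zero_add i)).comp α h = (Ext.mk₀ f).comp (e.comp α h) (zero_add j) :=
  Ext.comp_assoc _ _ _ _ _ (by lia)

/-- The map on local cohomology given by composition with an extension class: the functoriality
of `H^i_J` if the class has degree `0`, a connecting homomorphism if it has degree `1`. -/
noncomputable def localCohomologyComp (J : Ideal R) (α : Ext M N a) (h : i + a = j) :
    (localCohomology J i).obj M →ₗ[R] (localCohomology J j).obj N :=
  localCohomologyDesc (A := (localCohomology J j).obj N)
    (fun k => toLocalCohomology J j N k ∘ₗ α.postcompOfLinear R (quotPow J k) h)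
    fun _ l hkl e =>
      (congrArg (toLocalCohomology J j N l) (mk₀_comp_comp _ e α h)).trans
        (toLocalCohomology_mk₀_comp hkl _)

lemma localCohomologyComp_toLocalCohomology (α : Ext M N a) (h : i + a = j) (k : ℕ)
    (e : Ext (quotPow J k) M i) :
    localCohomologyComp J α h (toLocalCohomology J i M k e) =
      toLocalCohomology J j N k (e.comp α h) :=
  localCohomologyDesc_toLocalCohomology ..

lemma localCohomologyComp_exact (α : Ext M N a) (β : Ext N L b) (h : i + a = j) (h' : j + b = l)
    (hαβ : α.comp β rfl = 0)
    (hex : ∀ k (y : Ext (quotPow J k) N j), y.comp β h' = 0 →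
      ∃ x : Ext (quotPow J k) M i, x.comp α h = y) :
    Function.Exact (localCohomologyComp J α h) (localCohomologyComp J β h') := by
  refine LinearMap.exact_of_comp_of_mem_range (LinearMap.ext fun w => ?_) fun z hz => ?_
  · obtain ⟨k, x, rfl⟩ := exists_toLocalCohomology_eq w
    rw [LinearMap.comp_apply, localCohomologyComp_toLocalCohomology,
      localCohomologyComp_toLocalCohomology, Ext.comp_assoc x α β h rfl (by lia), hαβ,
      Ext.comp_zero, map_zero, LinearMap.zero_apply]
  · obtain ⟨k, y, rfl⟩ := exists_toLocalCohomology_eq z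
    rw [localCohomologyComp_toLocalCohomology, toLocalCohomology_eq_zero_iff] at hz
    obtain ⟨m, hkm, hm⟩ := hz
    rw [← mk₀_comp_comp] at hm
    obtain ⟨x, hx⟩ := hex m _ hm
    exact ⟨toLocalCohomology J i M m x,
      by rw [localCohomologyComp_toLocalCohomology, hx, toLocalCohomology_mk₀_comp]⟩

end Comp

section LongExactSequence

variable {S : ShortComplex (ModuleCat.{u} R)} (hS : S.ShortExact) (J : Ideal R) (i : ℕ)
include hS

lemma localCohomology_exact₂ :
    Function.Exact (localCohomologyComp J (Ext.mk₀ S.f) (add_zero i))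
      (localCohomologyComp J (Ext.mk₀ S.g) (add_zero i)) :=
  localCohomologyComp_exact _ _ _ _ (by simp) fun _ y hy => Ext.covariant_sequence_exact₂ _ hS y hy

lemma localCohomology_exact₃ :
    Function.Exact (localCohomologyComp J (Ext.mk₀ S.g) (add_zero i))
      (localCohomologyComp J hS.extClass (rfl : i + 1 = i + 1)) :=
  localCohomologyComp_exact _ _ _ _ (by simp)
    fun _ y hy => Ext.covariant_sequence_exact₃ _ hS y rfl hy

lemma localCohomology_exact₁ :
    Function.Exact (localCohomologyComp J hS.extClass (rfl : i + 1 = i + 1))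
      (localCohomologyComp J (Ext.mk₀ S.f) (add_zero (i + 1))) :=
  localCohomologyComp_exact _ _ _ _ (by simp)
    fun _ y hy => Ext.covariant_sequence_exact₁ _ hS y hy rfl

end LongExactSequence

end DirectLimit

section Vanishing

variable {R : Type u} [CommRing R]

lemma subsingleton_of_exact {A B C : Type*} [AddCommGroup A] [AddCommGroup B] [AddCommGroup C]
    [Module R A] [Module R B] [Module R C] [Subsingleton A] [Subsingleton C]
    {f : A →ₗ[R] B} {g : B →ₗ[R] C} (h : Function.Exact f g) : Subsingleton B := by
  refine subsingleton_of_forall_eq 0 fun b => ?_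
  obtain ⟨a, rfl⟩ := (h b).1 (Subsingleton.elim _ _)
  rw [Subsingleton.elim a 0, map_zero]

lemma shortExact_of_exact {A B C : Type u} [AddCommGroup A] [AddCommGroup B] [AddCommGroup C]
    [Module R A] [Module R B] [Module R C] {f : A →ₗ[R] B} {g : B →ₗ[R] C}
    (hf : Function.Injective f) (hfg : Function.Exact f g) (hg : Function.Surjective g) :
    (ModuleCat.shortComplexOfCompEqZero f g hfg.linearMap_comp_eq_zero).ShortExact :=
  ModuleCat.shortComplex_shortExact _ hfg hf hg

lemma shortExact_mkQ {N : Type u} [AddCommGroup N] [Module R N] (P : Submodule R N) :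
    (ModuleCat.shortComplexOfCompEqZero P.subtype P.mkQ
      (LinearMap.exact_subtype_mkQ P).linearMap_comp_eq_zero).ShortExact :=
  shortExact_of_exact P.injective_subtype (LinearMap.exact_subtype_mkQ P) P.mkQ_surjective

variable (J : Ideal R) (i : ℕ)

lemma subsingleton_localCohomology_X₂ {S : ShortComplex (ModuleCat.{u} R)} (hS : S.ShortExact)
    [Subsingleton ((localCohomology J i).obj S.X₁)]
    [Subsingleton ((localCohomology J i).obj S.X₃)] :
    Subsingleton ((localCohomology J i).obj S.X₂) :=
  subsingleton_of_exact (localCohomology_exact₂ hS J i)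

lemma subsingleton_localCohomology_X₁ {S : ShortComplex (ModuleCat.{u} R)} (hS : S.ShortExact)
    [Subsingleton ((localCohomology J i).obj S.X₃)]
    [Subsingleton ((localCohomology J (i + 1)).obj S.X₂)] :
    Subsingleton ((localCohomology J (i + 1)).obj S.X₁) :=
  subsingleton_of_exact (localCohomology_exact₁ hS J i)

lemma subsingleton_localCohomology_X₃ {S : ShortComplex (ModuleCat.{u} R)} (hS : S.ShortExact)
    [Subsingleton ((localCohomology J i).obj S.X₂)]
    [Subsingleton ((localCohomology J (i + 1)).obj S.X₁)] :
    Subsingleton ((localCohomology J i).obj S.X₃) :=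
  subsingleton_of_exact (localCohomology_exact₃ hS J i)

/-- The connecting isomorphism `H^i_J(X₃) ≃ H^{i+1}_J(X₁)` of a short exact sequence whose middle
term is acyclic in degrees `i` and `i + 1`. -/
noncomputable def localCohomologyConnectingEquiv {S : ShortComplex (ModuleCat.{u} R)}
    (hS : S.ShortExact) [Subsingleton ((localCohomology J i).obj S.X₂)]
    [Subsingleton ((localCohomology J (i + 1)).obj S.X₂)] :
    (localCohomology J i).obj S.X₃ ≃ₗ[R] (localCohomology J (i + 1)).obj S.X₁ :=
  .ofBijective (localCohomologyComp J hS.extClass (rfl : i + 1 = i + 1))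
    ⟨(injective_iff_map_eq_zero _).2 fun z hz => by
      obtain ⟨w, rfl⟩ := (localCohomology_exact₃ hS J i z).1 hz
      rw [Subsingleton.elim w 0, map_zero],
    fun z => (localCohomology_exact₁ hS J i z).1 (Subsingleton.elim _ _)⟩

/-- The isomorphism `H^i_J(X₂) ≃ H^i_J(X₃)` of a short exact sequence whose first term is acyclic in
degrees `i` and `i + 1`. -/
noncomputable def localCohomologyEquivOfSubsingleton {S : ShortComplex (ModuleCat.{u} R)}
    (hS : S.ShortExact) [Subsingleton ((localCohomology J i).obj S.X₁)]
    [Subsingleton ((localCohomology J (i + 1)).obj S.X₁)] :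
    (localCohomology J i).obj S.X₂ ≃ₗ[R] (localCohomology J i).obj S.X₃ :=
  .ofBijective (localCohomologyComp J (Ext.mk₀ S.g) (add_zero i))
    ⟨(injective_iff_map_eq_zero _).2 fun z hz => by
      obtain ⟨w, rfl⟩ := (localCohomology_exact₂ hS J i z).1 hz
      rw [Subsingleton.elim w 0, map_zero],
    fun z => (localCohomology_exact₃ hS J i z).1 (Subsingleton.elim _ _)⟩

lemma subsingleton_localCohomology_congr {M N : ModuleCat.{u} R} (e : M ≃ₗ[R] N) :
    Subsingleton ((localCohomology J i).obj M) ↔ Subsingleton ((localCohomology J i).obj N) :=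
  (((localCohomology J i).mapIso
    (e.toModuleIso : M ≅ N)).toLinearEquiv).toEquiv.subsingleton_congr

instance subsingleton_localCohomology_of_injective (M : ModuleCat.{u} R) [Injective M] :
    Subsingleton ((localCohomology J (i + 1)).obj M) := by
  refine subsingleton_of_forall_eq 0 fun z => ?_
  obtain ⟨k, e, rfl⟩ := exists_toLocalCohomology_eq z
  rw [e.eq_zero_of_injective, map_zero]

lemma localCohomologyComp_mk₀_smul_id {M : ModuleCat.{u} R} (r : R)
    (z : (localCohomology J i).obj M) :
    localCohomologyComp J (Ext.mk₀ (r • 𝟙 M)) (add_zero i) z = r • z := by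
  obtain ⟨k, e, rfl⟩ := exists_toLocalCohomology_eq z
  rw [localCohomologyComp_toLocalCohomology, ← Ext.smul_eq_comp_mk₀, map_smul]

lemma annihilator_le_annihilator_localCohomology (M : ModuleCat.{u} R) :
    Module.annihilator R M ≤ Module.annihilator R ((localCohomology J i).obj M) := by
  refine fun r hr => Module.mem_annihilator.2 fun z => ?_
  have hr0 : r • 𝟙 M = 0 := by
    ext x
    exact Module.mem_annihilator.1 hr x
  obtain ⟨k, e, rfl⟩ := exists_toLocalCohomology_eq z
  rw [← map_smul, Ext.smul_eq_comp_mk₀, hr0, Ext.mk₀_zero, Ext.comp_zero, map_zero]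

lemma smul_ext_quotPow_eq_zero {M : ModuleCat.{u} R} {k : ℕ} {r : R} (hr : r ∈ J ^ k)
    (e : Ext (quotPow J k) M i) : r • e = 0 := by
  have hr0 : r • 𝟙 (quotPow J k) = 0 := by
    ext
    exact (Submodule.Quotient.mk_eq_zero _).2 (Ideal.mul_mem_right _ _ hr)
  rw [← Ext.mk₀_id_comp e, ← Ext.smul_comp, ← Ext.mk₀_smul, hr0, Ext.mk₀_zero, Ext.zero_comp]

lemma primaryComponent_localCohomology (M : ModuleCat.{u} R) :
    J.primaryComponent ((localCohomology J i).obj M) = ⊤ := by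
  refine eq_top_iff.2 fun z _ => ?_
  obtain ⟨k, e, rfl⟩ := exists_toLocalCohomology_eq z
  refine mem_primaryComponent_iff.2 ⟨k, fun r hr => ?_⟩
  rw [← map_smul, smul_ext_quotPow_eq_zero J i hr, map_zero]

end Vanishing

section DegreeZero

variable {R : Type u} [CommRing R] (J : Ideal R)

/-- Evaluation at `1` of a map `R/J^k → M`, viewed as an extension class of degree `0`. -/
noncomputable def extZeroEval (k : ℕ) (M : ModuleCat.{u} R) : Ext (quotPow J k) M 0 →ₗ[R] M :=
  LinearMap.applyₗ (Submodule.Quotient.mk 1) ∘ₗ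
    (ModuleCat.homLinearEquiv (S := R) (M := quotPow J k) (N := M)).toLinearMap ∘ₗ
      Ext.linearEquiv₀.toLinearMap

variable {J}

lemma extZeroEval_mk₀ {k : ℕ} {M : ModuleCat.{u} R} (f : quotPow J k ⟶ M) :
    extZeroEval J k M (Ext.mk₀ f) = f.hom (Submodule.Quotient.mk 1) :=
  congr(($(Ext.linearEquiv₀.apply_symm_apply (R := R) f)).hom (Submodule.Quotient.mk 1))

lemma extZeroEval_injective (k : ℕ) (M : ModuleCat.{u} R) :
    Function.Injective (extZeroEval J k M) := by
  refine (injective_iff_map_eq_zero _).2 fun e he => ?_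
  obtain ⟨f, rfl⟩ := (Ext.mk₀_bijective _ _).2 e
  rw [extZeroEval_mk₀] at he
  rw [Ext.mk₀_eq_zero_iff]
  ext
  exact he

lemma extZeroEval_comp {k l : ℕ} (h : k ≤ l) {M : ModuleCat.{u} R} (e : Ext (quotPow J k) M 0) :
    extZeroEval J l M ((Ext.mk₀ (quotPowMap J h)).comp e (zero_add 0)) = extZeroEval J k M e := by
  obtain ⟨f, rfl⟩ := (Ext.mk₀_bijective _ _).2 e
  rw [Ext.mk₀_comp_mk₀, extZeroEval_mk₀, extZeroEval_mk₀]
  rfl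

variable (J) in
/-- The embedding of `H^0_J(M)` in `M`, sending the class of `f : R/J^k → M` to `f 1`. -/
noncomputable def localCohomologyZeroEval (M : ModuleCat.{u} R) :
    (localCohomology J 0).obj M →ₗ[R] M :=
  localCohomologyDesc (fun k => extZeroEval J k M) fun _ _ h e => extZeroEval_comp h e

lemma localCohomologyZeroEval_toLocalCohomology {M : ModuleCat.{u} R} {k : ℕ}
    (e : Ext (quotPow J k) M 0) :
    localCohomologyZeroEval J M (toLocalCohomology J 0 M k e) = extZeroEval J k M e :=
  localCohomologyDesc_toLocalCohomology ..

lemma localCohomologyZeroEval_injective (M : ModuleCat.{u} R) :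
    Function.Injective (localCohomologyZeroEval J M) := by
  refine (injective_iff_map_eq_zero _).2 fun z hz => ?_
  obtain ⟨k, e, rfl⟩ := exists_toLocalCohomology_eq z
  rw [localCohomologyZeroEval_toLocalCohomology] at hz
  rw [(map_eq_zero_iff _ (extZeroEval_injective k M)).1 hz, map_zero]

lemma range_localCohomologyZeroEval (M : ModuleCat.{u} R) :
    LinearMap.range (localCohomologyZeroEval J M) = J.primaryComponent M := by
  refine le_antisymm ?_ fun x hx => ?_
  · rintro _ ⟨z, rfl⟩
    exact J.primaryComponent_map_mem _
      ⟨z, primaryComponent_localCohomology J 0 M ▸ Submodule.mem_top⟩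
  · obtain ⟨k, hk⟩ := mem_primaryComponent_iff.1 hx
    let f : quotPow J k ⟶ M :=
      ModuleCat.ofHom ((J ^ k).liftQ (LinearMap.toSpanSingleton R M x) hk)
    refine ⟨toLocalCohomology J 0 M k (Ext.mk₀ f), ?_⟩
    rw [localCohomologyZeroEval_toLocalCohomology, extZeroEval_mk₀]
    exact one_smul R x

lemma localCohomologyZeroEval_naturality {M N : ModuleCat.{u} R} (f : M ⟶ N)
    (z : (localCohomology J 0).obj M) :
    localCohomologyZeroEval J N (localCohomologyComp J (Ext.mk₀ f) (add_zero 0) z) =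
      f.hom (localCohomologyZeroEval J M z) := by
  obtain ⟨k, e, rfl⟩ := exists_toLocalCohomology_eq z
  obtain ⟨g, rfl⟩ := (Ext.mk₀_bijective _ _).2 e
  rw [localCohomologyComp_toLocalCohomology, localCohomologyZeroEval_toLocalCohomology,
    localCohomologyZeroEval_toLocalCohomology, Ext.mk₀_comp_mk₀, extZeroEval_mk₀, extZeroEval_mk₀]
  rfl

variable (J) in
/-- `H^0_J(M)` is the submodule `Γ_J(M)` of elements killed by a power of `J`. -/
noncomputable def localCohomologyZeroEquiv (M : ModuleCat.{u} R) :
    (localCohomology J 0).obj M ≃ₗ[R] J.primaryComponent M :=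
  .ofInjective _ (localCohomologyZeroEval_injective M) ≪≫ₗ
    .ofEq _ _ (range_localCohomologyZeroEval M)

lemma subsingleton_localCohomology_zero_iff {M : ModuleCat.{u} R} :
    Subsingleton ((localCohomology J 0).obj M) ↔ J.primaryComponent M = ⊥ :=
  (localCohomologyZeroEquiv J M).toEquiv.subsingleton_congr.trans
    Submodule.subsingleton_iff_eq_bot

lemma subsingleton_localCohomology_one_X₁ {S : ShortComplex (ModuleCat.{u} R)} (hS : S.ShortExact)
    (h₂ : J.primaryComponent S.X₂ = ⊤) [Subsingleton ((localCohomology J 1).obj S.X₂)] :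
    Subsingleton ((localCohomology J 1).obj S.X₁) := by
  refine subsingleton_of_forall_eq 0 fun z => ?_
  obtain ⟨c, rfl⟩ := (localCohomology_exact₁ hS J 0 z).1 (Subsingleton.elim _ _)
  refine (localCohomology_exact₃ hS J 0 c).2 ?_
  obtain ⟨x, hx⟩ := hS.moduleCat_surjective_g (localCohomologyZeroEval J S.X₃ c)
  obtain ⟨b, rfl⟩ : x ∈ LinearMap.range (localCohomologyZeroEval J S.X₂) :=
    (range_localCohomologyZeroEval S.X₂).trans h₂ ▸ Submodule.mem_top
  exact ⟨b, localCohomologyZeroEval_injective _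
    ((localCohomologyZeroEval_naturality S.g b).trans hx)⟩

lemma exists_shortExact_injective_of_primaryComponent_eq_top [IsNoetherianRing R]
    {M : ModuleCat.{u} R} (hM : J.primaryComponent M = ⊤) :
    ∃ (E C : ModuleCat.{u} R) (f : M ⟶ E) (g : E ⟶ C) (w : f ≫ g = 0),
      (ShortComplex.mk f g w).ShortExact ∧ Injective E ∧ J.primaryComponent E = ⊤ := by
  obtain ⟨E, _, _, _, f, hf⟩ := exists_injective_linearMap (R := R) M
  let f' : M →ₗ[R] J.primaryComponent E :=
    f.codRestrict _ fun x => J.primaryComponent_map_mem f ⟨x, hM ▸ Submodule.mem_top⟩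
  exact ⟨_, _, _, _, _, shortExact_of_exact ((LinearMap.injective_codRestrict_iff _).2 hf)
    (LinearMap.exact_map_mkQ_range f') (Submodule.mkQ_surjective _),
    Module.injective_object_of_injective_module R _, primaryComponent_primaryComponent⟩

/-- `Γ_J` is the identity on a resolution by torsion injective modules. -/
lemma subsingleton_localCohomology_of_primaryComponent_eq_top [IsNoetherianRing R] (i : ℕ)
    {M : ModuleCat.{u} R} (hM : J.primaryComponent M = ⊤) :
    Subsingleton ((localCohomology J (i + 1)).obj M) := by
  induction i generalizing M with
  | zero =>
    obtain ⟨E, C, f, g, w, hS, _, hE⟩ := exists_shortExact_injective_of_primaryComponent_eq_top hM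
    exact subsingleton_localCohomology_one_X₁ hS hE
  | succ i ih =>
    obtain ⟨E, C, f, g, w, hS, _, hE⟩ := exists_shortExact_injective_of_primaryComponent_eq_top hM
    have := ih (primaryComponent_eq_top_of_surjective hS.moduleCat_surjective_g hE)
    exact subsingleton_localCohomology_X₁ J (i + 1) hS

end DegreeZero

section GrothendieckVanishing

variable {R : Type u} [CommRing R] {J : Ideal R}

/-- Multiplication by `x` is injective on `H^{i+1}_J(M)`, a `J`-power torsion module. -/
lemma subsingleton_localCohomology_of_isSMulRegular {x : R} (hxJ : x ∈ J) {M : ModuleCat.{u} R}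
    (hx : IsSMulRegular M x) (i : ℕ)
    [Subsingleton ((localCohomology J i).obj (.of R (QuotSMulTop x M)))] :
    Subsingleton ((localCohomology J (i + 1)).obj M) := by
  refine subsingleton_of_isSMulRegular_of_mem hxJ ?_ (primaryComponent_localCohomology J _ M)
  have hS := hx.smulShortComplex_shortExact
  have : Subsingleton ((localCohomology J i).obj (M.smulShortComplex x).X₃) := ‹_›
  refine isSMulRegular_iff_right_eq_zero_of_smul.2 fun z hz => ?_
  obtain ⟨w, rfl⟩ := (localCohomology_exact₁ hS J i z).1
    ((localCohomologyComp_mk₀_smul_id J (i + 1) x z).trans hz)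
  exact (congrArg _ (Subsingleton.elim w 0)).trans (map_zero _)

lemma supportDim_quotSMulTop_lt [IsNoetherianRing R] {N : Type*} [AddCommGroup N] [Module R N]
    [Module.Finite R N] {x : R} (hx : IsSMulRegular N x) {n : ℕ}
    (hN : Module.supportDim R N < (n + 1 : ℕ)) :
    Module.supportDim R (QuotSMulTop x N) < n := by
  have h := (Module.supportDim_quotSMulTop_succ_le_of_notMem_minimalPrimes
    fun _ => hx.notMem_of_mem_minimalPrimes).trans_lt hN
  rw [Nat.cast_add, Nat.cast_one] at h
  exact lt_of_add_lt_add_right h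

lemma subsingleton_localCohomology_of_finite_of_supportDim_lt [IsNoetherianRing R] (n : ℕ)
    (N : Type u) [AddCommGroup N] [Module R N] [Module.Finite R N]
    (hN : Module.supportDim R N < n) :
    Subsingleton ((localCohomology J n).obj (.of R N)) := by
  induction n generalizing N with
  | zero =>
    have : Subsingleton N := by
      rw [← Module.supportDim_eq_bot_iff_subsingleton (R := R)]
      exact (WithBot.lt_zero_iff_eq_bot _).1 hN
    exact subsingleton_localCohomology_zero_iff.2 (Subsingleton.elim _ _)
  | succ n ih =>
    obtain ⟨x, hxJ, hx⟩ := exists_mem_isSMulRegular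
      (primaryComponent_quotient_primaryComponent (N := N) (IsNoetherian.noetherian J))
    let Γ := J.primaryComponent N
    have : Subsingleton ((localCohomology J n).obj (.of R (QuotSMulTop x (N ⧸ Γ)))) :=
      ih _ (supportDim_quotSMulTop_lt hx
        ((Module.supportDim_le_of_surjective _ Γ.mkQ_surjective).trans_lt hN))
    have : Subsingleton ((localCohomology J (n + 1)).obj (.of R (N ⧸ Γ))) :=
      subsingleton_localCohomology_of_isSMulRegular hxJ hx n
    have : Subsingleton ((localCohomology J (n + 1)).obj (.of R Γ)) :=
      subsingleton_localCohomology_of_primaryComponent_eq_top n primaryComponent_primaryComponent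
    exact subsingleton_localCohomology_X₂ J (n + 1) (shortExact_mkQ Γ)

lemma exists_fg_submodule_comp_eq [IsNoetherianRing R] {N : Type u} [AddCommGroup N] [Module R N]
    (X : Type u) [AddCommGroup X] [Module R X] [Module.Finite R X] {i : ℕ}
    (e : Ext (ModuleCat.of R X) (ModuleCat.of R N) i) :
    ∃ P : Submodule R N, P.FG ∧ ∃ e' : Ext (ModuleCat.of R X) (ModuleCat.of R P) i,
      e'.comp (Ext.mk₀ (ModuleCat.ofHom P.subtype)) (add_zero i) = e := by
  induction i generalizing X with
  | zero =>
    obtain ⟨f, rfl⟩ := (Ext.mk₀_bijective _ _).2 e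
    refine ⟨LinearMap.range f.hom, Module.Finite.iff_fg.1 (Module.Finite.range _),
      Ext.mk₀ (ModuleCat.ofHom f.hom.rangeRestrict), ?_⟩
    rw [Ext.mk₀_comp_mk₀]
    rfl
  | succ i ih =>
    obtain ⟨n, p, hp⟩ := Module.Finite.exists_fin' R X
    have : Projective (ModuleCat.of R (Fin n → R)) :=
      (IsProjective.iff_projective _).1 inferInstance
    have hS := LinearMap.shortExact_shortComplexKer hp
    obtain ⟨e₁, rfl⟩ := Ext.contravariant_sequence_exact₃ hS _ e
      (Ext.eq_zero_of_projective (P := ModuleCat.of R (Fin n → R)) _) (add_comm 1 i)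
    obtain ⟨P, hP, e', rfl⟩ := ih (LinearMap.ker p) e₁
    exact ⟨P, hP, hS.extClass.comp e' (add_comm 1 i), Ext.comp_assoc_of_third_deg_zero ..⟩

lemma subsingleton_localCohomology_of_fg_submodules [IsNoetherianRing R] (i : ℕ) {N : Type u}
    [AddCommGroup N] [Module R N]
    (h : ∀ P : Submodule R N, P.FG → Subsingleton ((localCohomology J i).obj (.of R P))) :
    Subsingleton ((localCohomology J i).obj (.of R N)) := by
  refine subsingleton_of_forall_eq 0 fun z => ?_
  obtain ⟨k, e, rfl⟩ := exists_toLocalCohomology_eq z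
  obtain ⟨P, hP, e', rfl⟩ := exists_fg_submodule_comp_eq (R ⧸ J ^ k) e
  have := h P hP
  rw [← localCohomologyComp_toLocalCohomology, Subsingleton.elim (toLocalCohomology J i _ k e') 0,
    map_zero]

theorem subsingleton_localCohomology_of_supportDim_lt [IsNoetherianRing R] (n : ℕ)
    (M : ModuleCat.{u} R) (hM : Module.supportDim R M < n) :
    Subsingleton ((localCohomology J n).obj M) := by
  refine subsingleton_localCohomology_of_fg_submodules n fun P hP => ?_
  have := Module.Finite.iff_fg.2 hP
  exact subsingleton_localCohomology_of_finite_of_supportDim_lt n P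
    ((Module.supportDim_le_of_injective P.subtype P.injective_subtype).trans_lt hM)

end GrothendieckVanishing

section IteratedLocalCohomology

variable {R : Type u} [CommRing R] {I K : Ideal R}

lemma primaryComponent_eq_bot_of_subsingleton_localCohomology_zero (hIK : I ≤ K)
    {N : ModuleCat.{u} R}
    (h : Subsingleton ((localCohomology K 0).obj ((localCohomology I 0).obj N))) :
    K.primaryComponent N = ⊥ := by
  rw [subsingleton_localCohomology_congr K 0 (N := .of R _) (localCohomologyZeroEquiv I N),
    subsingleton_localCohomology_zero_iff] at h
  refine eq_bot_iff.2 fun x hx => ?_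
  have hx' : (⟨x, primaryComponent_anti hIK hx⟩ : I.primaryComponent N) = 0 := by
    obtain ⟨k, hk⟩ := mem_primaryComponent_iff.1 hx
    exact (Submodule.mem_bot R).1 <| h ▸ mem_primaryComponent_iff.2
      ⟨k, fun r hr => Subtype.ext (hk r hr)⟩
  exact congrArg Subtype.val hx'

variable [IsNoetherianRing R]

lemma subsingleton_localCohomology_quotient_primaryComponent (hIK : I ≤ K) (E : Type u)
    [AddCommGroup E] [Module R E] [Module.Injective R E] (i : ℕ) :
    Subsingleton ((localCohomology K i).obj (.of R (E ⧸ I.primaryComponent E))) := by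
  cases i with
  | zero =>
    exact subsingleton_localCohomology_zero_iff.2 <| eq_bot_mono (primaryComponent_anti hIK)
      (primaryComponent_quotient_primaryComponent (IsNoetherian.noetherian I))
  | succ i =>
    have := Module.injective_object_of_injective_module R E
    have := Module.injective_object_of_injective_module R (I.primaryComponent E)
    exact subsingleton_localCohomology_X₃ K (i + 1) (shortExact_mkQ (I.primaryComponent E))

lemma exists_shortExact_acyclic_of_primaryComponent_eq_bot {N : ModuleCat.{u} R}
    (hN : I.primaryComponent N = ⊥) :
    ∃ (E C : ModuleCat.{u} R) (f : N ⟶ E) (g : E ⟶ C) (w : f ≫ g = 0),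
      (ShortComplex.mk f g w).ShortExact ∧
        ∀ K, I ≤ K → ∀ i, Subsingleton ((localCohomology K i).obj E) := by
  obtain ⟨E, _, _, _, f, hf⟩ := exists_injective_linearMap (R := R) N
  have hinj : Function.Injective ((I.primaryComponent E).mkQ ∘ₗ f) := by
    refine (injective_iff_map_eq_zero _).2 fun x hx => ?_
    obtain ⟨k, hk⟩ := mem_primaryComponent_iff.1 ((Submodule.Quotient.mk_eq_zero _).1 hx)
    refine (Submodule.mem_bot R).1 (hN ▸ mem_primaryComponent_iff.2 ⟨k, fun r hr => ?_⟩)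
    exact hf (by rw [map_smul, map_zero, hk r hr])
  exact ⟨_, _, _, _, _, shortExact_of_exact hinj (LinearMap.exact_map_mkQ_range _)
    (Submodule.mkQ_surjective _),
    fun K hIK i => subsingleton_localCohomology_quotient_primaryComponent hIK E i⟩

/-- The vanishing that the spectral sequence `H^p_K(H^q_I(N)) ⇒ H^{p+q}_K(N)` would give. Dividing
by `Γ_I(N)` and then embedding in a module that is acyclic for both `I` and `K` lowers `n` and
shifts `q` by one. -/
theorem subsingleton_localCohomology_of_iterated (hIK : I ≤ K) (n : ℕ) (N : ModuleCat.{u} R)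
    (h : ∀ p q, p + q = n →
      Subsingleton ((localCohomology K p).obj ((localCohomology I q).obj N))) :
    Subsingleton ((localCohomology K n).obj N) := by
  induction n generalizing N with
  | zero =>
    exact subsingleton_localCohomology_zero_iff.2
      (primaryComponent_eq_bot_of_subsingleton_localCohomology_zero hIK (h 0 0 rfl))
  | succ n ih =>
    let Γ := I.primaryComponent N
    have : Subsingleton ((localCohomology K (n + 1)).obj (.of R Γ)) :=
      (subsingleton_localCohomology_congr K _ (localCohomologyZeroEquiv I N)).1 (h (n + 1) 0 rfl)
    have (q : ℕ) : Subsingleton ((localCohomology I (q + 1)).obj (.of R Γ)) :=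
      subsingleton_localCohomology_of_primaryComponent_eq_top q primaryComponent_primaryComponent
    obtain ⟨E, C, f, g, w, hS, hE⟩ := exists_shortExact_acyclic_of_primaryComponent_eq_bot
      (N := .of R (N ⧸ Γ)) (primaryComponent_quotient_primaryComponent (IsNoetherian.noetherian I))
    have := hE I le_rfl
    have := hE K hIK
    have shift (q : ℕ) : (localCohomology I q).obj C ≃ₗ[R] (localCohomology I (q + 1)).obj N :=
      localCohomologyConnectingEquiv I q hS ≪≫ₗ
        (localCohomologyEquivOfSubsingleton I (q + 1) (shortExact_mkQ Γ)).symm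
    have : Subsingleton ((localCohomology K n).obj C) :=
      ih C fun p q hpq => (subsingleton_localCohomology_congr K p (shift q)).2
        (h p (q + 1) (congrArg Nat.succ hpq))
    have : Subsingleton ((localCohomology K (n + 1)).obj (.of R (N ⧸ Γ))) :=
      subsingleton_localCohomology_X₁ K n hS
    exact subsingleton_localCohomology_X₂ K (n + 1) (shortExact_mkQ Γ)

end IteratedLocalCohomology

section Support

variable {R : Type u} [CommRing R] {I : Ideal R} {M : ModuleCat.{u} R}

lemma support_subset_zeroLocus_of_primaryComponent_eq_top {N : Type*} [AddCommGroup N] [Module R N]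
    (hN : I.primaryComponent N = ⊤) : Module.support R N ⊆ PrimeSpectrum.zeroLocus I := by
  intro p hp
  obtain ⟨x, hx⟩ := Module.mem_support_iff_exists_annihilator.1 hp
  obtain ⟨k, hk⟩ := mem_primaryComponent_iff.1 (hN ▸ Submodule.mem_top : x ∈ I.primaryComponent N)
  refine p.2.le_of_pow_le (n := k) fun r hr => hx ?_
  exact Submodule.mem_annihilator_span_singleton _ _ |>.2 (hk r hr)

lemma support_localCohomology_subset_zeroLocus (q : ℕ) :
    Module.support R ((localCohomology I q).obj M) ⊆
      PrimeSpectrum.zeroLocus (I + Module.annihilator R M : Ideal R) := by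
  intro p hp
  rw [Ideal.add_eq_sup]
  exact sup_le (support_subset_zeroLocus_of_primaryComponent_eq_top
    (primaryComponent_localCohomology I q M) hp)
    ((annihilator_le_annihilator_localCohomology I q M).trans
      (Module.annihilator_le_of_mem_support hp))

lemma supportDim_localCohomology_le (q : ℕ) :
    Module.supportDim R ((localCohomology I q).obj M) ≤
      ringKrullDim (R ⧸ (I + Module.annihilator R M)) := by
  rw [ringKrullDim_quotient]
  exact Order.krullDim_le_of_strictMono
    (Set.inclusion (support_localCohomology_subset_zeroLocus q)) fun _ _ h => h

lemma subsingleton_localCohomology_of_cohomologicalDimension_lt {i : ℕ}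
    (h : cohomologicalDimension I M < i) : Subsingleton ((localCohomology I i).obj M) := by
  rw [← not_nontrivial_iff_subsingleton]
  exact fun hi => h.not_ge (le_sSup ⟨i, rfl, hi⟩)

end Support

theorem subsingleton_localCohomology_of_supportDim_localCohomology_lt {R : Type u} [CommRing R]
    [IsNoetherianRing R] {I K : Ideal R} (hIK : I ≤ K) (n : ℕ) (M : ModuleCat.{u} R)
    (h : ∀ p q, p + q = n → Module.supportDim R ((localCohomology I q).obj M) < p) :
    Subsingleton ((localCohomology K n).obj M) :=
  subsingleton_localCohomology_of_iterated hIK n M fun p q hpq =>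
    subsingleton_localCohomology_of_supportDim_lt p _ (h p q hpq)

/-- if `dim (R/(I + Ann M)) = d`, `H^{d+t}_{I+J}(M) ≠ 0` and `cd(I,M) = t`,
then `dim Supp H^t_I(M) = d`. -/
theorem krullDim_support_top_localCohomology_eq
    (R : Type u) [CommRing R] [IsNoetherianRing R] (I : Ideal R) (M : ModuleCat.{u} R)
    (d t : ℕ) (hd : ringKrullDim (R ⧸ (I + Module.annihilator R M)) = (d : WithBot ℕ∞))
    (J : Ideal R) (hJ : Nontrivial ((localCohomology (I + J) (d + t)).obj M))
    (hcd : cohomologicalDimension I M = (t : ℕ∞)) :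
    Order.krullDim (Module.support R ((localCohomology I t).obj M)) = (d : WithBot ℕ∞) := by
  have hle (q : ℕ) : Module.supportDim R ((localCohomology I q).obj M) ≤ d :=
    (supportDim_localCohomology_le q).trans_eq hd
  refine (hle t).antisymm (not_lt.1 fun hlt => not_subsingleton_iff_nontrivial.2 hJ ?_)
  refine subsingleton_localCohomology_of_supportDim_localCohomology_lt le_sup_left (d + t) M
    fun p q hpq => ?_
  rcases lt_trichotomy q t with hq | rfl | hq
  · exact (hle q).trans_lt (mod_cast (by lia : d < p))
  · obtain rfl : p = d := by lia
    exact hlt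
  · have := subsingleton_localCohomology_of_cohomologicalDimension_lt (I := I) (M := M)
      (hcd.trans_lt (mod_cast hq))
    exact (Module.supportDim_eq_bot_of_subsingleton R _).trans_lt (WithBot.bot_lt_coe _)
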